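/- arXiv:1710.01872 — 3 statements merged into one kernel-verified Lean document; each statement's English description precedes it below -/
import Mathlib

section
/- Let q be an odd prime power and let n be a divisor of (q−1)/2. If n is even, then for every integer m with 1 ≤ m ≤ n/2 there exists an [n, n−2m] LCD MDS code over F_q. If n is odd, then for every integer m with 1 ≤ m ≤ n/2 there exists an [n, n−2m−1] LCD MDS code over F_q. -/
/-!
The codes are generalized Reed–Solomon codes, and the construction works for every dimension
`k ≤ n`. The hypotheses give `2 * n ∣ q - 1`, so `F` contains a primitive `2n`-th root of unity `γ`;
then `ζ = γ ^ 2` is a primitive `n`-th root of unity. The code of dimension `k` consists of the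
vectors `(γ ^ (-(k - 1) * i) * p (ζ ^ i))_i` for `0 ≤ i < n` with `deg p < k`.

* It is MDS because a nonzero `p` vanishes at no more than `k - 1` of the points `ζ ^ i`.
* The inner product of the words of `X ^ l` and `X ^ j` is the character sum
  `∑ i, ζ ^ (i * (l + j - (k - 1)))`. For `l, j < k ≤ n` the number `l + j - (k - 1)` is divisible
  by `n` only if it is zero, so the sum is `n` if `l + j = k - 1` and `0` otherwise
  (`sum_grsWord_X_pow`). The Gram matrix is therefore `n` times the antidiagonal permutation
  matrix, which is invertible, so the code is LCD.

If `n` is even (resp. odd) the multipliers make this, up to signs of the coordinates when `n` is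
odd, a negacyclic (resp. cyclic) code whenever `k` is even, which is the case of the theorem.
-/

/-- `C` is an `[n, k]` LCD MDS code over the field `F`: it is a `k`-dimensional
linear subspace of `F^n`, it intersects its Euclidean dual trivially, and every
nonzero codeword has Hamming weight at least `n - k + 1`. -/
def IsLCDMDSCode {F : Type} [Field F] [DecidableEq F] {n : ℕ} (k : ℕ)
    (C : Submodule F (Fin n → F)) : Prop :=
  Module.finrank F C = k ∧
  (∀ x ∈ C, (∀ c ∈ C, ∑ i, x i * c i = 0) → x = 0) ∧
  (∀ x ∈ C, x ≠ 0 → n - k + 1 ≤ (Finset.univ.filter fun i => x i ≠ 0).card)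

section GRS

open Polynomial

/-- The generalized Reed–Solomon encoder with locators `γ ^ (2 * i)` and column multipliers
`γ ^ (-(k - 1) * i)`. -/
def grsWord {F : Type} [Field F] (γ : F) (n k : ℕ) : F[X] →ₗ[F] (Fin n → F) where
  toFun p i := (γ⁻¹ ^ (k - 1)) ^ (i : ℕ) * p.eval ((γ ^ 2) ^ (i : ℕ))
  map_add' p r := by
    ext i
    simp [mul_add]
  map_smul' a p := by
    ext i
    simp only [eval_smul, smul_eq_mul, RingHom.id_apply, Pi.smul_apply]
    ring

lemma grsWord_apply {F : Type} [Field F] (γ : F) (n k : ℕ) (p : F[X]) (i : Fin n) :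
    grsWord γ n k p i = (γ⁻¹ ^ (k - 1)) ^ (i : ℕ) * p.eval ((γ ^ 2) ^ (i : ℕ)) := rfl

/-- Orthogonality of characters: the Gram matrix of the code is antidiagonal. -/
lemma sum_grsWord_X_pow {F : Type} [Field F] {γ : F} {n k : ℕ} (hγ : IsPrimitiveRoot (γ ^ 2) n)
    (hγ0 : γ ≠ 0) (hkn : k ≤ n) {l j : ℕ} (hl : l < k) (hj : j < k) :
    ∑ i, grsWord γ n k (X ^ l) i * grsWord γ n k (X ^ j) i
      = if l + j = k - 1 then (n : F) else 0 := by
  set r : F := (γ ^ 2) ^ (l + j) / (γ ^ 2) ^ (k - 1) with hr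
  have hterm : ∀ i : Fin n,
      grsWord γ n k (X ^ l) i * grsWord γ n k (X ^ j) i = r ^ (i : ℕ) := by
    intro i
    simp only [grsWord_apply, eval_pow, eval_X]
    rw [hr, div_pow, eq_div_iff (by positivity), inv_pow, inv_pow]
    field_simp
    ring
  have hζ0 : (γ ^ 2) ≠ 0 := pow_ne_zero _ hγ0
  rw [Finset.sum_congr rfl fun i _ => hterm i, Fin.sum_univ_eq_sum_range (fun i => r ^ i) n]
  split_ifs with h
  · have hr1 : r = 1 := by rw [hr, h, div_self (pow_ne_zero _ hζ0)]
    simp [hr1]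
  · have hr1 : r ≠ 1 := by
      intro h1
      rw [hr, div_eq_one_iff_eq (pow_ne_zero _ hζ0)] at h1
      rcases le_or_gt (k - 1) (l + j) with hle | hlt
      · obtain ⟨d, hd⟩ := Nat.exists_eq_add_of_le hle
        rw [hd, pow_add, mul_eq_left₀ (pow_ne_zero _ hζ0)] at h1
        have := Nat.eq_zero_of_dvd_of_lt (hγ.dvd_of_pow_eq_one _ h1) (by omega)
        omega
      · exact h (hγ.pow_inj (by omega) (by omega) h1)
    have hrn : r ^ n = 1 := by
      rw [hr, div_pow, pow_right_comm, pow_right_comm _ (k - 1),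
        hγ.pow_eq_one, one_pow, one_pow, div_one]
    rw [geom_sum_eq hr1, hrn, sub_self, zero_div]

/-- A nonzero polynomial of degree less than `k` has at most `k - 1` roots among the locators. -/
lemma le_card_grsWord {F : Type} [Field F] [DecidableEq F] {γ : F} {n k : ℕ}
    (hγ : IsPrimitiveRoot (γ ^ 2) n) (hγ0 : γ ≠ 0) (hkn : k ≤ n) {p : F[X]}
    (hp : p ∈ degreeLT F k) (hp0 : p ≠ 0) :
    n - k + 1 ≤ (Finset.univ.filter fun i => grsWord γ n k p i ≠ 0).card := by
  have hdeg : p.natDegree < k := by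
    rw [mem_degreeLT] at hp
    exact (natDegree_lt_iff_degree_lt hp0).2 hp
  have hzero : (Finset.univ.filter fun i => grsWord γ n k p i = 0).card ≤ p.natDegree := by
    rw [← Finset.card_image_of_injOn (f := fun i : Fin n => (γ ^ 2) ^ (i : ℕ))
      (fun a _ b _ hab => Fin.ext (hγ.pow_inj a.2 b.2 hab))]
    apply Polynomial.card_le_degree_of_subset_roots
    intro x hx
    obtain ⟨i, hi, rfl⟩ := Finset.mem_image.1 (Finset.mem_def.2 hx)
    rw [Finset.mem_filter, grsWord_apply, mul_eq_zero] at hi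
    rw [mem_roots hp0]
    exact hi.2.resolve_left (pow_ne_zero _ (pow_ne_zero _ (inv_ne_zero hγ0)))
  have hsum := Finset.card_filter_add_card_filter_not (s := (Finset.univ : Finset (Fin n)))
    (fun i => grsWord γ n k p i = 0)
  rw [Finset.card_univ, Fintype.card_fin] at hsum
  have heq : (Finset.univ.filter fun i => ¬ grsWord γ n k p i = 0).card
    = (Finset.univ.filter fun i => grsWord γ n k p i ≠ 0).card := rfl
  omega

lemma exists_isLCDMDSCode {F : Type} [Field F] [DecidableEq F] {γ : F} {n k : ℕ} (hn : 0 < n)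
    (hγ : IsPrimitiveRoot (γ ^ 2) n) (hγ0 : γ ≠ 0) (hkn : k ≤ n) :
    ∃ C : Submodule F (Fin n → F), IsLCDMDSCode k C := by
  have : NeZero n := ⟨hn.ne'⟩
  have hn0 : (n : F) ≠ 0 := (hγ.neZero').ne
  have hker : ∀ p ∈ degreeLT F k, grsWord γ n k p = 0 → p = 0 := by
    intro p hp h0
    by_contra hp0
    have := le_card_grsWord hγ hγ0 hkn hp hp0
    simp [h0] at this
  refine ⟨(degreeLT F k).map (grsWord γ n k), ?_, ?_, ?_⟩
  · have hinj : Function.Injective ((grsWord γ n k).domRestrict (degreeLT F k)) := by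
      rw [injective_iff_map_eq_zero]
      rintro ⟨p, hp⟩ h
      exact Subtype.ext (hker p hp h)
    rw [← LinearMap.range_domRestrict, LinearMap.finrank_range_of_inj hinj,
      (degreeLTEquiv F k).finrank_eq, Module.finrank_fin_fun]
  · rintro x ⟨p, hp, rfl⟩ hx
    suffices hcoeff : p = 0 by rw [hcoeff, map_zero]
    have hsupp : p = ∑ l ∈ Finset.range k, p.coeff l • X ^ l := by
      simp only [smul_eq_C_mul]
      rcases eq_or_ne p 0 with h0 | h0
      · simp [h0]
      · exact p.as_sum_range_C_mul_X_pow' ((natDegree_lt_iff_degree_lt h0).2 (mem_degreeLT.1 hp))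
    ext l
    rw [coeff_zero]
    rcases le_or_gt k l with hl | hl
    · exact coeff_eq_zero_of_degree_lt ((mem_degreeLT.1 hp).trans_le (by exact_mod_cast hl))
    -- Pairing with the word of `X ^ (k - 1 - l)` isolates the coefficient of index `l`.
    have hX : (X ^ (k - 1 - l) : F[X]) ∈ degreeLT F k := by
      rw [mem_degreeLT, degree_X_pow]
      exact_mod_cast (by omega : k - 1 - l < k)
    have h := hx _ (Submodule.mem_map_of_mem hX)
    have hcalc : ∑ i, grsWord γ n k p i * grsWord γ n k (X ^ (k - 1 - l)) i
        = p.coeff l * n := by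
      conv_lhs => rw [hsupp]
      simp only [map_sum, map_smul, Finset.sum_apply, Pi.smul_apply, smul_eq_mul, Finset.sum_mul]
      rw [Finset.sum_comm, Finset.sum_eq_single_of_mem l (Finset.mem_range.2 hl)]
      · simp only [mul_assoc]
        rw [← Finset.mul_sum, sum_grsWord_X_pow hγ hγ0 hkn hl (by omega), if_pos (by omega)]
      · intro b hb hbl
        simp only [mul_assoc]
        rw [← Finset.mul_sum, sum_grsWord_X_pow hγ hγ0 hkn (Finset.mem_range.1 hb) (by omega),
          if_neg (by omega), mul_zero]
    rw [hcalc] at h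
    exact (mul_eq_zero.1 h).resolve_right hn0
  · rintro x ⟨p, hp, rfl⟩ hx
    exact le_card_grsWord hγ hγ0 hkn hp (fun h => hx (by rw [h, map_zero]))

end GRS

theorem stmt4 (q n : ℕ) (hq : IsPrimePow q) (hqodd : Odd q)
    (F : Type) [Field F] [Fintype F] [DecidableEq F]
    (hcard : Fintype.card F = q)
    (hdvd : n ∣ (q - 1) / 2) :
    (Even n → ∀ m : ℕ, 1 ≤ m → 2 * m ≤ n →
      ∃ C : Submodule F (Fin n → F), IsLCDMDSCode (n - 2 * m) C) ∧
    (Odd n → ∀ m : ℕ, 1 ≤ m → 2 * m ≤ n →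
      ∃ C : Submodule F (Fin n → F), IsLCDMDSCode (n - 2 * m - 1) C) := by
  have hq1 := hq.one_lt
  obtain ⟨s, hs⟩ := hqodd
  obtain ⟨t, ht⟩ := hdvd
  have hst : s = n * t := by omega
  have hn : 0 < n := Nat.pos_of_ne_zero (by rintro rfl; simp at hst; omega)
  obtain ⟨g, hg⟩ := IsCyclic.exists_ofOrder_eq_natCard (α := Fˣ)
  have hcardU : Nat.card Fˣ = q - 1 := by
    rw [Nat.card_units, Nat.card_eq_fintype_card, hcard]
  have hprim : IsPrimitiveRoot (g : F) (q - 1) := by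
    rw [← hcardU, ← hg]
    exact IsPrimitiveRoot.coe_units_iff.2 (IsPrimitiveRoot.orderOf g)
  -- `q - 1 = 2 * s = t * 2 * n`, so `g ^ t` is a primitive `2n`-th root of unity.
  have hγ : IsPrimitiveRoot (((g : F) ^ t) ^ 2) n := by
    rw [← pow_mul]
    exact hprim.pow (by omega) (by rw [hs, hst, Nat.add_sub_cancel]; ring)
  have hγ0 : (g : F) ^ t ≠ 0 := pow_ne_zero _ g.ne_zero
  exact ⟨fun _ m _ _ => exists_isLCDMDSCode hn hγ hγ0 (by omega),
    fun _ m _ _ => exists_isLCDMDSCode hn hγ hγ0 (by omega)⟩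
end

section
/- Let p be an odd prime, q = p^r with r > 1, and write N_t = (p^t−1)/(p−1). Set n = p·N_{r−1}. Then for every integer k with 0 ≤ k ≤ n there exists an [n,k] LCD MDS code over F_q. -/
open Polynomial

/-- The form `(u, v) ↦ ∑ i, x i * u i * v i` restricted to `W` has trivial radical. -/
def WeightedNondeg {F ι : Type} [Field F] [Fintype ι] (W : Submodule F (ι → F)) (x : ι → F) :
    Prop :=
  ∀ u ∈ W, (∀ v ∈ W, ∑ i, x i * u i * v i = 0) → u = 0

lemma sum_update_weight {F ι : Type} [Field F] [Fintype ι] [DecidableEq ι]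
    (x u v : ι → F) (j : ι) (s : F) :
    ∑ i, Function.update x j s i * u i * v i
      = ∑ i, x i * u i * v i + (s - x j) * u j * v j := by
  rw [← Finset.add_sum_erase _ _ (Finset.mem_univ j),
    ← Finset.add_sum_erase Finset.univ (fun i => x i * u i * v i) (Finset.mem_univ j)]
  have h : ∑ i ∈ Finset.univ.erase j, Function.update x j s i * u i * v i
      = ∑ i ∈ Finset.univ.erase j, x i * u i * v i := by
    refine Finset.sum_congr rfl fun i hi => ?_
    rw [Function.update_of_ne (Finset.ne_of_mem_erase hi)]
  rw [h, Function.update_self]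
  ring

/-- Of two distinct values for the weight at `j`, at least one keeps the form nondegenerate.
If `u` and `w` are radical vectors for the two values, then, `B` being the original form,
`B(u, ·)` and `B(w, ·)` are both multiples of the `j`-th coordinate functional; a combination
of `u` and `w` is then in the radical of `B`, and its `j`-th coordinate forces `s = t`. -/
lemma WeightedNondeg.update {F ι : Type} [Field F] [Fintype ι] [DecidableEq ι]
    {W : Submodule F (ι → F)} {x : ι → F} (h : WeightedNondeg W x) (j : ι) {s t : F}
    (hst : s ≠ t) :
    WeightedNondeg W (Function.update x j s) ∨ WeightedNondeg W (Function.update x j t) := by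
  by_contra! hcon
  obtain ⟨hs, ht⟩ := hcon
  unfold WeightedNondeg at hs ht
  push Not at hs ht
  obtain ⟨u, hu, hu0, hune⟩ := hs
  obtain ⟨w, hw, hw0, hwne⟩ := ht
  simp only [sum_update_weight] at hu0 hw0
  -- a radical vector of a perturbed form vanishing at `j` would be in the radical of `B`
  have huj : u j ≠ 0 := fun h0 => hune (h u hu fun v hv => by simpa [h0] using hu0 v hv)
  have hwj : w j ≠ 0 := fun h0 => hwne (h w hw fun v hv => by simpa [h0] using hw0 v hv)
  have hz := h (((t - x j) * w j) • u - ((s - x j) * u j) • w)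
    (W.sub_mem (W.smul_mem _ hu) (W.smul_mem _ hw)) fun v hv => by
      have e : ∑ i, x i * (((t - x j) * w j) • u - ((s - x j) * u j) • w) i * v i
          = ((t - x j) * w j) * ∑ i, x i * u i * v i
            - ((s - x j) * u j) * ∑ i, x i * w i * v i := by
        rw [Finset.mul_sum, Finset.mul_sum, ← Finset.sum_sub_distrib]
        refine Finset.sum_congr rfl fun i _ => ?_
        simp only [Pi.sub_apply, Pi.smul_apply, smul_eq_mul]
        ring
      rw [e]
      linear_combination ((t - x j) * w j) * hu0 v hv - ((s - x j) * u j) * hw0 v hv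
  have hzj := congrFun hz j
  simp only [Pi.sub_apply, Pi.smul_apply, smul_eq_mul, Pi.zero_apply] at hzj
  have : (t - s) * (w j * u j) = 0 := by linear_combination hzj
  rcases mul_eq_zero.1 this with h1 | h1
  · exact hst (sub_eq_zero.1 h1).symm
  · exact mul_ne_zero hwj huj h1

lemma exists_square_weights {F ι : Type} [Field F] [Fintype ι] [DecidableEq ι]
    {W : Submodule F (ι → F)} {x : ι → F} (h : WeightedNondeg W x) {b : F} (hb : b ≠ 0)
    (hb1 : b ^ 2 ≠ 1) :
    ∃ a : ι → F, (∀ i, a i ≠ 0) ∧ WeightedNondeg W (fun i => a i ^ 2) := by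
  have key : ∀ J : Finset ι, ∃ y : ι → F, (∀ i ∈ J, ∃ a, a ≠ 0 ∧ y i = a ^ 2) ∧
      WeightedNondeg W y := by
    intro J
    induction J using Finset.induction_on with
    | empty => exact ⟨x, by simp, h⟩
    | insert j J _ ih =>
      obtain ⟨y, hy, hnd⟩ := ih
      have step : ∀ a : F, a ≠ 0 → ∀ i ∈ insert j J, ∃ a', a' ≠ 0 ∧
          Function.update y j (a ^ 2) i = a' ^ 2 := by
        intro a ha i hi
        by_cases hij : i = j
        · subst hij
          exact ⟨a, ha, by simp⟩
        · rw [Function.update_of_ne hij]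
          exact hy i (Finset.mem_of_mem_insert_of_ne hi hij)
      have hne : b ^ 2 ≠ (1 : F) ^ 2 := by simpa using hb1
      rcases hnd.update j hne with h1 | h1
      · exact ⟨_, step b hb, h1⟩
      · exact ⟨_, step 1 one_ne_zero, h1⟩
  obtain ⟨y, hy, hnd⟩ := key Finset.univ
  choose a ha hya using fun i => hy i (Finset.mem_univ i)
  exact ⟨a, ha, by rwa [funext hya] at hnd⟩

/-- The Reed–Solomon encoder with evaluation points `e` and column multipliers `a`, on
polynomials of degree less than `k`. -/
noncomputable def rsMap {F : Type} [Field F] {n : ℕ} (k : ℕ) (e a : Fin n → F) :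
    degreeLT F k →ₗ[F] (Fin n → F) where
  toFun f i := a i * (f : F[X]).eval (e i)
  map_add' f g := by ext i; simp [mul_add]
  map_smul' c f := by ext i; simp [mul_left_comm]

lemma rsMap_apply {F : Type} [Field F] {n : ℕ} (k : ℕ) (e a : Fin n → F) (f : degreeLT F k)
    (i : Fin n) : rsMap k e a f i = a i * (f : F[X]).eval (e i) := rfl

lemma card_zeros_lt {F : Type} [Field F] {n k : ℕ} {e : Fin n → F}
    (he : Function.Injective e) {f : F[X]} (hf : f ∈ degreeLT F k) (hf0 : f ≠ 0)
    (s : Finset (Fin n)) (hs : ∀ i ∈ s, f.eval (e i) = 0) : s.card < k := by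
  by_contra! hc
  refine hf0 (eq_zero_of_degree_lt_of_eval_index_eq_zero s he.injOn ?_ hs)
  exact (mem_degreeLT.1 hf).trans_le (by exact_mod_cast hc)

lemma card_first {n k : ℕ} (hk : k ≤ n) :
    (Finset.univ.filter fun i : Fin n => (i : ℕ) < k).card = k := by
  rw [Fin.card_filter_val_lt, min_eq_right hk]

/-- The first `k` coordinates are an information set of the Reed–Solomon code. -/
lemma indicator_nondeg {F : Type} [Field F] {n k : ℕ} (hk : k ≤ n) {e : Fin n → F}
    (he : Function.Injective e) :
    WeightedNondeg (LinearMap.range (rsMap k e 1)) (fun i => if (i : ℕ) < k then 1 else 0) := by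
  rintro _ ⟨f, rfl⟩ h
  set S : Finset (Fin n) := Finset.univ.filter fun i => (i : ℕ) < k with hS
  have hfz : ∀ j ∈ S, (f : F[X]).eval (e j) = 0 := by
    intro j hj
    -- pair `f` with a polynomial vanishing at all the first `k` points except `e j`
    set g : F[X] := ∏ m ∈ S.erase j, (X - C (e m)) with hg
    have hgk : g ∈ degreeLT F k := by
      rw [mem_degreeLT, hg, degree_prod_of_monic _ _ fun m _ => monic_X_sub_C _]
      simp only [degree_X_sub_C, Finset.sum_const, nsmul_eq_mul, mul_one]
      have := Finset.card_erase_lt_of_mem hj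
      rw [card_first hk] at this
      exact_mod_cast this
    have h1 := h _ ⟨⟨g, hgk⟩, rfl⟩
    rw [Finset.sum_eq_single j] at h1
    · have hjk : (j : ℕ) < k := by simpa [hS] using hj
      have hgj : g.eval (e j) ≠ 0 := by
        rw [hg, eval_prod, Finset.prod_ne_zero_iff]
        intro m hm
        simpa [sub_eq_zero] using fun h => Finset.ne_of_mem_erase hm (he h).symm
      simpa [rsMap_apply, hjk, hgj] using h1
    · intro i _ hij
      by_cases hik : (i : ℕ) < k
      · have : g.eval (e i) = 0 := by
          rw [hg, eval_prod]
          exact Finset.prod_eq_zero (i := i) (by simp [hS, hij, hik]) (by simp)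
        simp [rsMap_apply, this]
      · simp [hik]
    · simp
  have hf0 : (f : F[X]) = 0 := by
    by_contra hne
    have := card_zeros_lt he f.2 hne S hfz
    rw [card_first hk] at this
    exact lt_irrefl _ this
  ext i
  simp [rsMap_apply, hf0]

theorem exists_lcd_mds {F : Type} [Field F] [Fintype F] [DecidableEq F]
    (hF : 3 < Fintype.card F) {n k : ℕ} (hn : n ≤ Fintype.card F) (hk : k ≤ n) :
    ∃ C : Submodule F (Fin n → F), IsLCDMDSCode k C := by
  obtain ⟨e⟩ : Nonempty (Fin n ↪ F) :=
    Function.Embedding.nonempty_of_card_le (by simpa using hn)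
  have he := e.injective
  obtain ⟨b, hb⟩ : ∃ b : F, b ∉ ({0, 1, -1} : Finset F) := by
    by_contra! hcon
    have h1 : Fintype.card F ≤ ({0, 1, -1} : Finset F).card :=
      Finset.card_le_card fun x _ => hcon x
    have h2 : ({0, 1, -1} : Finset F).card ≤ 3 := Finset.card_le_three
    omega
  simp only [Finset.mem_insert, Finset.mem_singleton, not_or] at hb
  obtain ⟨a, ha, hnd⟩ := exists_square_weights (indicator_nondeg hk he) hb.1
    (fun h => (eq_or_eq_neg_of_sq_eq_sq b 1 (by rw [h, one_pow])).elim hb.2.1 hb.2.2)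
  have hinj : Function.Injective (rsMap k e a) := by
    rw [← LinearMap.ker_eq_bot, LinearMap.ker_eq_bot']
    intro f hf
    by_contra hne
    have := card_zeros_lt he f.2 (fun h => hne (Subtype.ext h)) Finset.univ fun i _ => by
      simpa [rsMap_apply, ha i] using congrFun hf i
    simp at this
    omega
  refine ⟨LinearMap.range (rsMap k e a), ?_, ?_, ?_⟩
  · rw [LinearMap.finrank_range_of_inj hinj, (degreeLTEquiv F k).finrank_eq]
    simp
  · rintro _ ⟨f, rfl⟩ h
    have h1 := hnd (rsMap k e 1 f) ⟨f, rfl⟩ (by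
      rintro _ ⟨g, rfl⟩
      rw [← h _ ⟨g, rfl⟩]
      refine Finset.sum_congr rfl fun i _ => ?_
      simp only [rsMap_apply, Pi.one_apply]
      ring)
    ext i
    have h2 := congrFun h1 i
    simp only [rsMap_apply, Pi.one_apply, one_mul, Pi.zero_apply] at h2
    simp [rsMap_apply, h2]
  · rintro _ ⟨f, rfl⟩ hne
    have hf0 : (f : F[X]) ≠ 0 := fun h0 => hne (by ext i; simp [rsMap_apply, h0])
    have h1 := card_zeros_lt he f.2 hf0
      (Finset.univ.filter fun i => ¬ rsMap k e a f i ≠ 0) fun i hi => by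
        simpa [rsMap_apply, ha i] using hi
    have h2 := Finset.card_filter_add_card_filter_not (s := (Finset.univ : Finset (Fin n)))
      (fun i => rsMap k e a f i ≠ 0)
    rw [Finset.card_univ, Fintype.card_fin] at h2
    omega

theorem stmt5 (p r : ℕ) (hp : p.Prime) (hpodd : Odd p) (hr : 1 < r)
    (F : Type) [Field F] [Fintype F] [DecidableEq F]
    (hcard : Fintype.card F = p ^ r)
    (k : ℕ) (hk : k ≤ p * ((p ^ (r - 1) - 1) / (p - 1))) :
    ∃ C : Submodule F (Fin (p * ((p ^ (r - 1) - 1) / (p - 1))) → F),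
      IsLCDMDSCode k C := by
  refine exists_lcd_mds ?_ ?_ hk
  · have h2 : 2 ^ 2 ≤ p ^ r :=
      (Nat.pow_le_pow_left hp.two_le 2).trans (Nat.pow_le_pow_right hp.pos hr)
    omega
  · rw [hcard]
    calc p * ((p ^ (r - 1) - 1) / (p - 1)) ≤ p * p ^ (r - 1) :=
          Nat.mul_le_mul_left p ((Nat.div_le_self _ _).trans (Nat.sub_le _ _))
      _ = p ^ r := by rw [← pow_succ', Nat.sub_add_cancel hr.le]
end

section
/- Let q be an odd prime power and let k be an integer with 0 ≤ k ≤ q, k ≠ 2 and k ≠ q−2. Then there exists a [q, k] LCD MDS code over F_q (of length n = q). -/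
open Polynomial

/-- If a vector supported on at most `m` of the distinct nodes `p i` is orthogonal to the
evaluations of all polynomials of degree `< m`, it is zero: test against a Lagrange basis. -/
lemma eq_zero_of_sum_eval_eq_zero {F ι : Type} [Field F] [DecidableEq ι]
    {p : ι → F} (hp : Function.Injective p) (m : ℕ) (T : Finset ι) (hT : T.card ≤ m) (y : ι → F)
    (h : ∀ g : F[X], g.degree < m → ∑ i ∈ T, y i * g.eval (p i) = 0) :
    ∀ b ∈ T, y b = 0 := by
  intro b hb
  have hdeg : (Lagrange.basis T p b).degree < m := by
    rw [Lagrange.degree_basis hp.injOn hb]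
    have := Finset.card_pos.2 ⟨b, hb⟩
    exact_mod_cast (by omega : T.card - 1 < m)
  have key := h _ hdeg
  rw [Finset.sum_eq_single b] at key
  · simpa [Lagrange.eval_basis_self hp.injOn hb] using key
  · intro i hi hib
    rw [Lagrange.eval_basis_of_ne (Ne.symm hib) hi, mul_zero]
  · exact fun hb' => absurd hb hb'

lemma sum_eval_eq_zero_of_natDegree_lt {F : Type} [Field F] [Fintype F]
    (P : F[X]) (hP : P.natDegree < Fintype.card F - 1) : ∑ a : F, P.eval a = 0 := by
  simp_rw [eval_eq_sum_range]
  rw [Finset.sum_comm]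
  refine Finset.sum_eq_zero fun i hi => ?_
  rw [← Finset.mul_sum, FiniteField.sum_pow_lt_card_sub_one F i, mul_zero]
  rw [Finset.mem_range] at hi
  omega

/-- The map sending a polynomial of degree `< m` to its values at the nodes `p i`, scaled by the
multipliers `v i`. -/
noncomputable def grsMap {F : Type} [Field F] {n : ℕ} (p v : Fin n → F) (m : ℕ) :
    degreeLT F m →ₗ[F] (Fin n → F) :=
  (LinearMap.pi fun i => v i • leval (p i)) ∘ₗ (degreeLT F m).subtype

/-- The generalized Reed–Solomon code with nodes `p`, multipliers `v` and dimension parameter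
`m`. -/
noncomputable def grsCode {F : Type} [Field F] {n : ℕ} (p v : Fin n → F) (m : ℕ) :
    Submodule F (Fin n → F) :=
  LinearMap.range (grsMap p v m)

lemma mem_grsCode {F : Type} [Field F] {n : ℕ} (p v : Fin n → F) (m : ℕ) (x : Fin n → F) :
    x ∈ grsCode p v m ↔ ∃ f : F[X], f.degree < m ∧ x = fun i => v i * f.eval (p i) := by
  constructor
  · rintro ⟨⟨f, hf⟩, rfl⟩
    refine ⟨f, mem_degreeLT.1 hf, ?_⟩
    ext i
    simp [grsMap, leval]
  · rintro ⟨f, hf, rfl⟩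
    refine ⟨⟨f, mem_degreeLT.2 hf⟩, ?_⟩
    ext i
    simp [grsMap, leval]

lemma finrank_grsCode {F : Type} [Field F] {n : ℕ} {p v : Fin n → F}
    (hp : Function.Injective p) (hv : ∀ i, v i ≠ 0) {m : ℕ} (hm : m ≤ n) :
    Module.finrank F (grsCode p v m) = m := by
  have hinj : Function.Injective (grsMap p v m) := by
    rw [injective_iff_map_eq_zero]
    rintro ⟨f, hf⟩ h0
    have hf' := mem_degreeLT.1 hf
    ext1
    refine eq_zero_of_degree_lt_of_eval_index_eq_zero (v := p) (s := Finset.univ) hp.injOn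
      (hf'.trans_le (by simpa using hm)) fun i _ => ?_
    have := congrFun h0 i
    simpa [grsMap, leval, hv i] using this
  rw [grsCode, LinearMap.finrank_range_of_inj hinj, (degreeLTEquiv F m).finrank_eq]
  simp

/-- The multiplier equal to `c` on `S` and to `1` elsewhere. -/
def twoValued {F : Type} [Field F] {n : ℕ} (S : Finset (Fin n)) (c : F) (i : Fin n) : F :=
  if i ∈ S then c else 1

lemma twoValued_ne_zero {F : Type} [Field F] {n : ℕ} (S : Finset (Fin n)) {c : F} (hc : c ≠ 0)
    (i : Fin n) : twoValued S c i ≠ 0 := by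
  unfold twoValued
  split_ifs <;> simp [hc]

/-- The full-length code with multiplier `c` on `m` nodes and `1` elsewhere is LCD and MDS. The
hypothesis on `c ^ 2` is only required when there is a node carrying the multiplier `c`. -/
lemma isLCDMDSCode_grsCode {F : Type} [Field F] [Fintype F] [DecidableEq F] {q : ℕ}
    (e : Fin q ≃ F) {m : ℕ} (hm : 2 * m < q) (S : Finset (Fin q))
    (hS : S.card = m) (c : F) (hc : c ≠ 0) (hc1 : 0 < m → c ^ 2 ≠ 1) :
    IsLCDMDSCode m (grsCode e (twoValued S c) m) := by
  have hcard : Fintype.card F = q := by simpa using (Fintype.card_congr e).symm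
  have hv := twoValued_ne_zero S hc
  refine ⟨finrank_grsCode e.injective hv (by omega), ?_, ?_⟩
  · intro x hx horth
    obtain ⟨f, hf, rfl⟩ := (mem_grsCode _ _ _ _).1 hx
    suffices f = 0 by ext i; simp [this]
    rcases Nat.eq_zero_or_pos m with rfl | hm0
    · simpa using hf
    refine eq_zero_of_degree_lt_of_eval_index_eq_zero (v := e) (s := S) e.injective.injOn
      (by rwa [hS]) ?_
    refine eq_zero_of_sum_eval_eq_zero e.injective m S hS.le (fun i => f.eval (e i)) ?_
    intro g hg
    have hall : ∑ i, f.eval (e i) * g.eval (e i) = 0 := by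
      have hdeg : (f * g).natDegree < Fintype.card F - 1 := by
        have h1 : f.natDegree < m := (WithBot.unbotD_lt_iff fun _ => hm0).2 hf
        have h2 : g.natDegree < m := (WithBot.unbotD_lt_iff fun _ => hm0).2 hg
        have := natDegree_mul_le (p := f) (q := g)
        omega
      have := sum_eval_eq_zero_of_natDegree_lt (f * g) hdeg
      rw [← e.sum_comp] at this
      simpa using this
    have h := horth _ ((mem_grsCode _ _ _ _).2 ⟨g, hg, rfl⟩)
    have hsplit : ∀ i, twoValued S c i * f.eval (e i) * (twoValued S c i * g.eval (e i)) =
        f.eval (e i) * g.eval (e i) +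
          if i ∈ S then (c ^ 2 - 1) * (f.eval (e i) * g.eval (e i)) else 0 := by
      intro i
      unfold twoValued
      split_ifs <;> ring
    simp_rw [hsplit] at h
    rw [Finset.sum_add_distrib, hall, zero_add, Finset.sum_ite_mem, Finset.univ_inter,
      ← Finset.mul_sum] at h
    exact (mul_eq_zero.1 h).resolve_left (sub_ne_zero.2 (hc1 hm0))
  · intro x hx hx0
    obtain ⟨f, hf, rfl⟩ := (mem_grsCode _ _ _ _).1 hx
    by_contra hlt
    apply hx0
    suffices f = 0 by ext i; simp [this]
    refine eq_zero_of_degree_lt_of_eval_index_eq_zero (v := e)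
      (s := Finset.univ.filter fun i => f.eval (e i) = 0) e.injective.injOn
      (hf.trans_le ?_) (by simp)
    have hadd := Finset.card_filter_add_card_filter_not (s := (Finset.univ : Finset (Fin q)))
      (fun i => f.eval (e i) = 0)
    simp only [mul_ne_zero_iff, hv, ne_eq, not_false_eq_true, true_and] at hlt
    rw [Finset.card_univ, Fintype.card_fin] at hadd
    exact_mod_cast (by omega)

/-- The Euclidean dual of an LCD generalized Reed–Solomon code of dimension `m` is an LCD MDS code
of dimension `q - m`; a dual word of weight at most `m` vanishes by interpolation on its support. -/
lemma isLCDMDSCode_dual_grsCode {F : Type} [Field F] [DecidableEq F] {q : ℕ}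
    (p v : Fin q → F) (hp : Function.Injective p)
    (hv : ∀ i, v i ≠ 0) {m : ℕ} (hm : m ≤ q) (h : IsLCDMDSCode m (grsCode p v m)) :
    ∃ D : Submodule F (Fin q → F), IsLCDMDSCode (q - m) D := by
  obtain ⟨hdim, hlcd, -⟩ := h
  set C := grsCode p v m
  let B : LinearMap.BilinForm F (Fin q → F) := dotProductBilin F F
  have hB : ∀ x y, B x y = ∑ i, x i * y i := fun x y => rfl
  have hsymm : ∀ x y, B x y = B y x := fun x y => by simp [hB, mul_comm]
  have hrefl : B.IsRefl := fun x y hxy => by rw [hsymm, hxy]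
  have hnd : B.Nondegenerate := by
    refine (LinearMap.IsRefl.nondegenerate_iff_separatingLeft (B := B) hrefl).2 ?_
    intro x hx
    ext i
    simpa [hB, Pi.single_apply] using hx (Pi.single i 1)
  refine ⟨B.orthogonal C, ?_, ?_, ?_⟩
  · rw [LinearMap.BilinForm.finrank_orthogonal hnd, hdim]
    simp
  · intro x hx hxD
    -- Orthogonality to the dual puts `x` back into the code, by biduality.
    have hxC : x ∈ C := by
      rw [← LinearMap.BilinForm.orthogonal_orthogonal hnd hrefl C]
      intro y hy
      change B y x = 0
      rw [hsymm]
      exact hxD y hy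
    refine hlcd x hxC fun y hy => ?_
    rw [← hB, hsymm]
    exact hx y hy
  · intro x hx hx0
    by_contra hlt
    apply hx0
    have hvan := eq_zero_of_sum_eval_eq_zero hp m (Finset.univ.filter fun i => x i ≠ 0)
      (by omega) (fun i => v i * x i) (fun g hg => by
        have h1 : B (fun i => v i * g.eval (p i)) x = 0 :=
          hx _ ((mem_grsCode _ _ _ _).2 ⟨g, hg, rfl⟩)
        rw [hB] at h1
        rw [Finset.sum_filter]
        refine Eq.trans ?_ h1
        refine Finset.sum_congr rfl fun i _ => ?_
        split_ifs with hi
        · ring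
        · simp [not_not.1 hi])
    ext i
    by_contra hi
    exact mul_ne_zero (hv i) hi (hvan i (by simpa using hi))

theorem stmt8 (q : ℕ) (hq : IsPrimePow q) (hqodd : Odd q)
    (F : Type) [Field F] [Fintype F] [DecidableEq F]
    (hcard : Fintype.card F = q)
    (k : ℕ) (hk : k ≤ q) (hk2 : k ≠ 2) (hkq : k ≠ q - 2) :
    ∃ C : Submodule F (Fin q → F), IsLCDMDSCode k C := by
  let e : Fin q ≃ F := (Fintype.equivFinOfCardEq hcard).symm
  obtain ⟨r, hr⟩ := hqodd
  -- A multiplier exists for `3 < q`; for `q = 3` the excluded dimensions leave only `m = 0`.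
  have hmult : ∀ m, 2 * m < q → (m = k ∨ m = q - k) → ∃ c : F, c ≠ 0 ∧ (0 < m → c ^ 2 ≠ 1) := by
    intro m hm hmk
    by_cases hm0 : 0 < m
    · have h3 : ({0, 1, -1} : Finset F).card < Fintype.card F :=
        Finset.card_le_three.trans_lt (by omega)
      obtain ⟨c, hc⟩ := Finset.exists_mem_notMem_of_card_lt_card
        (s := ({0, 1, -1} : Finset F)) (t := Finset.univ) (by simpa using h3)
      simp only [Finset.mem_insert, Finset.mem_singleton, not_or] at hc
      refine ⟨c, hc.2.1, fun _ h => ?_⟩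
      rcases (show c = 1 ∨ c = -1 by simpa using h) with h | h
      · exact hc.2.2.1 h
      · exact hc.2.2.2 h
    · exact ⟨1, one_ne_zero, fun h => absurd h hm0⟩
  have hset : ∀ m, m ≤ q → ∃ S : Finset (Fin q), S.card = m := fun m hm => by
    obtain ⟨S, -, hS⟩ := Finset.exists_subset_card_eq
      (s := (Finset.univ : Finset (Fin q))) (n := m) (by simpa using hm)
    exact ⟨S, hS⟩
  by_cases hsmall : 2 * k < q
  · obtain ⟨c, hc, hc1⟩ := hmult k hsmall (Or.inl rfl)
    obtain ⟨S, hS⟩ := hset k hk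
    exact ⟨_, isLCDMDSCode_grsCode e hsmall S hS c hc hc1⟩
  · have hlarge : 2 * (q - k) < q := by omega
    obtain ⟨c, hc, hc1⟩ := hmult (q - k) hlarge (Or.inr rfl)
    obtain ⟨S, hS⟩ := hset (q - k) (by omega)
    have := isLCDMDSCode_dual_grsCode e _ e.injective (twoValued_ne_zero S hc) (by omega)
      (isLCDMDSCode_grsCode e hlarge S hS c hc hc1)
    rwa [Nat.sub_sub_self hk] at this
end
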